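/- Let n ≥ 3 be an integer, g(u) = u - u^(1-4/n), and G(u) = u²/2 - (n/(2n-4)) u^(2-4/n) + 1/(n-2). Let f be a nonconstant positive periodic solution of f'' - f^(1-4/n) + f = 0 with energy c = (1/2) f'² + G(f) satisfying 0 < c < 1/(n-2), and let a, b be the unique real numbers with 0 < a < 1 < b and G(a) = G(b) = c. Then the minimal period of f equals √2 · ∫_a^b du/√(c - G(u)). -/

import Mathlib

open Real

/-- The antiderivative `G(u) = u²/2 - (n/(2n-4)) u^(2-4/n) + 1/(n-2)` of
`g(u) = u - u^(1-4/n)` vanishing at `u = 1`. -/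
noncomputable def derdzG (n : ℕ) (u : ℝ) : ℝ :=
  u ^ 2 / 2 - ((n : ℝ) / (2 * (n : ℝ) - 4)) * u ^ (2 - 4 / (n : ℝ)) + 1 / ((n : ℝ) - 2)


theorem derdz_hasDerivAt (n : ℕ) (hn : 3 ≤ n) (u : ℝ) (hu : 0 < u) :
    HasDerivAt (derdzG n) (u - u ^ (1 - 4 / (n : ℝ))) u := by
  have hn' : (3 : ℝ) ≤ n := by exact_mod_cast hn
  have h1 : HasDerivAt (fun u : ℝ => u ^ (2 - 4 / (n : ℝ)))
      ((2 - 4 / (n : ℝ)) * u ^ (2 - 4 / (n : ℝ) - 1)) u :=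
    Real.hasDerivAt_rpow_const (Or.inl hu.ne')
  have h2 : HasDerivAt (fun u : ℝ => u ^ 2 / 2) u u := by
    have := (hasDerivAt_pow 2 u).div_const 2
    exact this.congr_deriv (by simp)
  have h3 := (h2.sub (h1.const_mul ((n : ℝ) / (2 * (n : ℝ) - 4)))).add_const (1 / ((n : ℝ) - 2))
  refine HasDerivAt.congr_deriv (f := derdzG n) h3 ?_
  have e : 2 - 4 / (n : ℝ) - 1 = 1 - 4 / (n : ℝ) := by ring
  rw [e, ← mul_assoc]
  have e2 : (n : ℝ) / (2 * (n : ℝ) - 4) * (2 - 4 / (n : ℝ)) = 1 := by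
    have : (2 * (n : ℝ) - 4) ≠ 0 := by linarith
    have : (n : ℝ) ≠ 0 := by linarith
    field_simp
    exact div_self (by linarith)
  rw [e2, one_mul]

theorem derdz_anti (n : ℕ) (hn : 3 ≤ n) : StrictAntiOn (derdzG n) (Set.Ioc 0 1) := by
  have hn' : (3 : ℝ) ≤ n := by exact_mod_cast hn
  apply strictAntiOn_of_deriv_neg (convex_Ioc 0 1)
  · intro x hx
    exact (derdz_hasDerivAt n hn x hx.1).continuousAt.continuousWithinAt
  · intro x hx
    rw [interior_Ioc] at hx
    rw [(derdz_hasDerivAt n hn x hx.1).deriv]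
    have : x ^ (1 : ℝ) < x ^ (1 - 4 / (n : ℝ)) := by
      apply Real.rpow_lt_rpow_of_exponent_gt hx.1 hx.2
      have : 0 < 4 / (n : ℝ) := by positivity
      linarith
    rw [Real.rpow_one] at this
    linarith

theorem derdz_mono (n : ℕ) (hn : 3 ≤ n) : StrictMonoOn (derdzG n) (Set.Ici 1) := by
  have hn' : (3 : ℝ) ≤ n := by exact_mod_cast hn
  apply strictMonoOn_of_deriv_pos (convex_Ici 1)
  · intro x hx
    exact (derdz_hasDerivAt n hn x (lt_of_lt_of_le one_pos hx)).continuousAt.continuousWithinAt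
  · intro x hx
    rw [interior_Ici] at hx
    have hx1 : (1 : ℝ) < x := hx
    rw [(derdz_hasDerivAt n hn x (by linarith)).deriv]
    have : x ^ (1 - 4 / (n : ℝ)) < x ^ (1 : ℝ) := by
      apply Real.rpow_lt_rpow_of_exponent_lt hx1
      have : 0 < 4 / (n : ℝ) := by positivity
      linarith
    rw [Real.rpow_one] at this
    linarith

theorem derdz_lip (r a b : ℝ) (ha : 0 < a) :
    ∃ K, LipschitzOnWith K (fun p : ℝ × ℝ => (p.2, p.1 ^ r - p.1))
      (Set.Icc a b ×ˢ Set.univ) := by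
  have hC : ContDiffOn ℝ 1 (fun x : ℝ => x ^ r - x) (Set.Icc a b) := by
    intro x hx
    have hx0 : x ≠ 0 := (lt_of_lt_of_le ha hx.1).ne'
    exact ((Real.contDiffAt_rpow_const_of_ne hx0).sub contDiffAt_id).contDiffWithinAt
  obtain ⟨K, hK⟩ := hC.exists_lipschitzOnWith one_ne_zero (convex_Icc a b) isCompact_Icc
  have h1 : LipschitzOnWith (K * 1) ((fun x : ℝ => x ^ r - x) ∘ (Prod.fst : ℝ × ℝ → ℝ))
      (Set.Icc a b ×ˢ Set.univ) :=
    hK.comp LipschitzWith.prod_fst.lipschitzOnWith (fun p hp => hp.1)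
  have h2 : LipschitzOnWith 1 (Prod.snd : ℝ × ℝ → ℝ) (Set.Icc a b ×ˢ Set.univ) :=
    LipschitzWith.prod_snd.lipschitzOnWith
  exact ⟨_, h2.prodMk h1⟩

/-- Reflection symmetry at critical points. -/
theorem derdz_reflect (r a b : ℝ) (ha : 0 < a) (f : ℝ → ℝ)
    (hab : ∀ t, f t ∈ Set.Icc a b)
    (hd : ∀ t, HasDerivAt f (deriv f t) t)
    (hdd : ∀ t, HasDerivAt (deriv f) (f t ^ r - f t) t)
    (s : ℝ) (hs : deriv f s = 0) (x : ℝ) : f (2 * s - x) = f x := by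
  obtain ⟨K, hK⟩ := derdz_lip r a b ha
  have hr : ∀ t : ℝ, HasDerivAt (fun x => 2 * s - x) (-1) t := fun t =>
    (hasDerivAt_id t).const_sub (2 * s)
  have key := ODE_solution_unique_univ (v := fun _ p => (p.2, p.1 ^ r - p.1))
    (s := fun _ => Set.Icc a b ×ˢ Set.univ) (K := K)
    (f := fun t => (f (2 * s - t), -deriv f (2 * s - t))) (g := fun t => (f t, deriv f t))
    (t₀ := s) (fun _ => hK)
    (fun t => ⟨by
      have h1 := (hd (2 * s - t)).comp t (hr t)
      have h2 := ((hdd (2 * s - t)).comp t (hr t)).neg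
      have h3 := h1.prodMk h2
      exact h3.congr_deriv (by simp), ⟨hab _, trivial⟩⟩)
    (fun t => ⟨(hd t).prodMk (hdd t), ⟨hab _, trivial⟩⟩)
    (by
      have : 2 * s - s = s := by ring
      simp [this, hs])
  exact congrArg Prod.fst (congrFun key x)

/-- If `f` is a nonconstant positive periodic solution of
`f'' - f^(1-4/n) + f = 0` with energy `0 < c < 1/(n-2)` and `0 < a < 1 < b` satisfy
`G(a) = G(b) = c`, then the minimal period of `f` equals `√2 ∫_a^b du/√(c - G(u))`. -/
theorem normalized_equation_period_formula
    (n : ℕ) (hn : 3 ≤ n)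
    (f : ℝ → ℝ) (c a b : ℝ)
    (hsm : ContDiff ℝ 2 f)
    (hpos : ∀ t, 0 < f t)
    (hper : ∃ T : ℝ, 0 < T ∧ Function.Periodic f T)
    (hnc : ¬ ∃ A : ℝ, ∀ t, f t = A)
    (hode : ∀ t, deriv (deriv f) t - f t ^ (1 - 4 / (n : ℝ)) + f t = 0)
    (henergy : ∀ t, (1 / 2) * (deriv f t) ^ 2 + derdzG n (f t) = c)
    (hc₀ : 0 < c) (hc₁ : c < 1 / ((n : ℝ) - 2))
    (ha : 0 < a) (ha1 : a < 1) (hb1 : 1 < b)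
    (hGa : derdzG n a = c) (hGb : derdzG n b = c) :
    (0 < Real.sqrt 2 * ∫ u in a..b, 1 / Real.sqrt (c - derdzG n u)) ∧
    Function.Periodic f (Real.sqrt 2 * ∫ u in a..b, 1 / Real.sqrt (c - derdzG n u)) ∧
    (∀ T' : ℝ, 0 < T' → Function.Periodic f T' →
      Real.sqrt 2 * (∫ u in a..b, 1 / Real.sqrt (c - derdzG n u)) ≤ T') := by
  classical
  have hd : ∀ t, HasDerivAt f (deriv f t) t := fun t =>
    ((hsm.differentiable (by norm_num)) t).hasDerivAt
  have hsm1 : ContDiff ℝ 1 (deriv f) := by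
    have : ContDiff ℝ (1 + 1) f := by
      convert hsm using 1
      norm_num
    exact (contDiff_succ_iff_deriv.1 this).2.2
  have hdc : Continuous (deriv f) := hsm1.continuous
  have hfc : Continuous f := hsm.continuous
  have hdd : ∀ t, HasDerivAt (deriv f) (f t ^ (1 - 4 / (n : ℝ)) - f t) t := by
    intro t
    have h := ((hsm1.differentiable (by norm_num)) t).hasDerivAt
    have e := hode t
    have e' : deriv (deriv f) t = f t ^ (1 - 4 / (n : ℝ)) - f t := by linarith
    rwa [e'] at h
  have hanti := derdz_anti n hn
  have hmono := derdz_mono n hn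
  have F1 : ∀ u ∈ Set.Ioo a b, derdzG n u < c := by
    intro u hu
    rcases le_total u 1 with h | h
    · rw [← hGa]
      exact hanti ⟨ha, ha1.le⟩ ⟨ha.trans hu.1, h⟩ hu.1
    · rw [← hGb]
      exact hmono h hb1.le hu.2
  have F2 : ∀ u, 0 < u → derdzG n u ≤ c → u ∈ Set.Icc a b := by
    intro u hu huc
    constructor
    · by_contra h
      push Not at h
      have := hanti ⟨hu, by linarith⟩ ⟨ha, ha1.le⟩ h
      linarith
    · by_contra h
      push Not at h
      have := hmono (show (1 : ℝ) ≤ b from hb1.le) (show (1 : ℝ) ≤ u by linarith) h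
      linarith
  have hab : ∀ t, f t ∈ Set.Icc a b := by
    intro t
    apply F2 _ (hpos t)
    have := henergy t
    nlinarith [sq_nonneg (deriv f t)]
  have F3 : ∀ t, deriv f t = 0 → f t = a ∨ f t = b := by
    intro t ht
    have h := henergy t
    rw [ht] at h
    by_contra hcon
    push Not at hcon
    have := F1 (f t) ⟨lt_of_le_of_ne (hab t).1 (Ne.symm hcon.1), lt_of_le_of_ne (hab t).2 hcon.2⟩
    norm_num at h
    linarith
  obtain ⟨T, hT, hTp⟩ := hper
  have hne : (Set.Icc 0 T).Nonempty := ⟨0, le_refl _, hT.le⟩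
  obtain ⟨p, -, hp⟩ := isCompact_Icc.exists_isMinOn hne hfc.continuousOn
  obtain ⟨q, -, hq⟩ := isCompact_Icc.exists_isMaxOn hne hfc.continuousOn
  have hpm : ∀ x, f p ≤ f x := by
    intro x
    obtain ⟨y, hy, hxy⟩ := hTp.exists_mem_Ico₀ hT x
    rw [hxy]
    exact hp (Set.Ico_subset_Icc_self hy)
  have hqm : ∀ x, f x ≤ f q := by
    intro x
    obtain ⟨y, hy, hxy⟩ := hTp.exists_mem_Ico₀ hT x
    rw [hxy]
    exact hq (Set.Ico_subset_Icc_self hy)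
  have hp0 : deriv f p = 0 :=
    IsLocalMin.deriv_eq_zero (Filter.Eventually.of_forall hpm)
  have hq0 : deriv f q = 0 :=
    IsLocalMax.deriv_eq_zero (Filter.Eventually.of_forall hqm)
  have hpa : f p = a := by
    rcases F3 p hp0 with h | h
    · exact h
    · exact absurd ⟨b, fun t => le_antisymm (hab t).2 (h ▸ hpm t)⟩ hnc
  have hqb : f q = b := by
    rcases F3 q hq0 with h | h
    · exact absurd ⟨a, fun t => le_antisymm (h ▸ hqm t) (hab t).1⟩ hnc
    · exact h
  obtain ⟨q', hq', hqq⟩ := hTp.exists_mem_Ico hT q p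
  have hq'b : f q' = b := by rw [← hqq, hqb]
  have hK1 : IsCompact (Set.Icc p q' ∩ f ⁻¹' {b}) :=
    isCompact_Icc.inter_right (isClosed_singleton.preimage hfc)
  obtain ⟨t, ⟨htI, htb⟩, htl⟩ := hK1.exists_isLeast ⟨q', ⟨hq'.1, le_refl _⟩, hq'b⟩
  have htb : f t = b := htb
  have hK2 : IsCompact (Set.Icc p t ∩ f ⁻¹' {a}) :=
    isCompact_Icc.inter_right (isClosed_singleton.preimage hfc)
  obtain ⟨s, ⟨hsI, hsa⟩, hsg⟩ := hK2.exists_isGreatest ⟨p, ⟨le_refl _, htI.1⟩, hpa⟩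
  have hsa : f s = a := hsa
  have hst : s < t := by
    refine lt_of_le_of_ne hsI.2 ?_
    rintro rfl
    linarith
  have hin : ∀ x ∈ Set.Ioo s t, f x ∈ Set.Ioo a b := by
    intro x hx
    constructor
    · refine lt_of_le_of_ne (hab x).1 (fun h => ?_)
      have := hsg ⟨⟨hsI.1.trans hx.1.le, hx.2.le⟩, h.symm⟩
      linarith [hx.1]
    · refine lt_of_le_of_ne (hab x).2 (fun h => ?_)
      have := htl ⟨⟨hsI.1.trans hx.1.le, hx.2.le.trans htI.2⟩, h⟩
      linarith [hx.2]
  have hs0 : deriv f s = 0 :=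
    IsLocalMin.deriv_eq_zero (Filter.Eventually.of_forall fun x => by
      rw [hsa]
      exact (hab x).1)
  have ht0 : deriv f t = 0 :=
    IsLocalMax.deriv_eq_zero (Filter.Eventually.of_forall fun x => by
      rw [htb]
      exact (hab x).2)
  have hnz : ∀ x ∈ Set.Ioo s t, deriv f x ≠ 0 := by
    intro x hx h
    rcases F3 x h with h | h
    · linarith [(hin x hx).1]
    · linarith [(hin x hx).2]
  have hdpos : ∀ x ∈ Set.Ioo s t, 0 < deriv f x := by
    intro x hx
    obtain ⟨y, hy, hy'⟩ := exists_deriv_eq_slope f hst hfc.continuousOn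
      (hsm.differentiable (by norm_num)).differentiableOn
    have hypos : 0 < deriv f y := by
      rw [hy', hsa, htb]
      exact div_pos (by linarith) (by linarith)
    by_contra hcon
    push Not at hcon
    obtain ⟨z, hz, hz0⟩ := isPreconnected_Ioo.intermediate_value hx hy hdc.continuousOn
      ⟨hcon, hypos.le⟩
    exact hnz z hz hz0
  have hsmono : StrictMonoOn f (Set.Icc s t) := by
    apply strictMonoOn_of_deriv_pos (convex_Icc s t) hfc.continuousOn
    rw [interior_Icc]
    exact hdpos
  have himg : f '' Set.Ioo s t = Set.Ioo a b := by
    apply Set.Subset.antisymm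
    · rintro _ ⟨x, hx, rfl⟩
      exact hin x hx
    · have := intermediate_value_Ioo hst.le hfc.continuousOn
      rwa [hsa, htb] at this
  have hint : ∫ u in a..b, 1 / Real.sqrt (c - derdzG n u) = Real.sqrt 2 * (t - s) := by
    rw [intervalIntegral.integral_of_le (by linarith), MeasureTheory.integral_Ioc_eq_integral_Ioo,
      ← himg, MeasureTheory.integral_image_eq_integral_abs_deriv_smul measurableSet_Ioo
        (fun x _ => (hd x).hasDerivWithinAt)
        (hsmono.injOn.mono Set.Ioo_subset_Icc_self)]
    have : ∀ x ∈ Set.Ioo s t,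
        |deriv f x| • (1 / Real.sqrt (c - derdzG n (f x))) = Real.sqrt 2 := by
      intro x hx
      have h := henergy x
      have hp := hdpos x hx
      have e : c - derdzG n (f x) = (deriv f x) ^ 2 / 2 := by linarith
      rw [e, Real.sqrt_div (sq_nonneg _), Real.sqrt_sq hp.le, abs_of_pos hp, smul_eq_mul]
      field_simp
    rw [MeasureTheory.setIntegral_congr_fun measurableSet_Ioo this]
    simp [hst.le, mul_comm]
  have hP : Real.sqrt 2 * ∫ u in a..b, 1 / Real.sqrt (c - derdzG n u) = 2 * (t - s) := by
    rw [hint, ← mul_assoc, Real.mul_self_sqrt (by norm_num)]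
  rw [hP]
  have hrs := derdz_reflect _ a b ha f hab hd hdd s hs0
  have hrt := derdz_reflect _ a b ha f hab hd hdd t ht0
  refine ⟨by linarith, ?_, ?_⟩
  · intro x
    rw [← hrs x, ← hrt (2 * s - x)]
    congr 1
    ring
  · intro T' hT' hper'
    by_contra hcon
    push Not at hcon
    have h1 : f (s + T') = a := by rw [hper' s, hsa]
    rcases le_or_gt (s + T') t with h | h
    · have := hsmono ⟨le_refl _, hst.le⟩ ⟨by linarith, h⟩ (show s < s + T' by linarith)
      linarith
    · have h2 := hrt (s + T')
      have := (hin (2 * t - (s + T')) ⟨by linarith, by linarith⟩).1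
      linarith
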